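/- For a monoid S and nonempty sets J, I with an injection J → I, if the right S-act S^I is indecomposable then S^J is indecomposable. -/

import Mathlib

/-- `act` is a (unital, associative) right `S`-action on `A`. -/
def IsRAct (S : Type*) [Monoid S] {A : Type*} (act : A → S → A) : Prop :=
  (∀ (a : A) (s t : S), act (act a s) t = act a (s * t)) ∧ ∀ a : A, act a 1 = a

/-- `B` is a subact: a nonempty subset closed under the action. -/
def IsSubact {S A : Type*} (act : A → S → A) (B : Set A) : Prop :=
  B.Nonempty ∧ ∀ a ∈ B, ∀ s : S, act a s ∈ B

/-- An act is indecomposable if it is not the disjoint union of two subacts. -/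
def Indecomp {S A : Type*} (act : A → S → A) : Prop :=
  ¬ ∃ B C : Set A, IsSubact act B ∧ IsSubact act C ∧ B ∩ C = ∅ ∧ B ∪ C = Set.univ

/-- `S` is left reversible: any two principal (hence any two) right ideals intersect. -/
def LeftReversible (S : Type*) [Monoid S] : Prop :=
  ∀ a b : S, ∃ u v : S, a * u = b * v

/-- A scheme of length `n ≥ 1` connecting `a` to `b`:
`a = a₁s₁, aᵢtᵢ = aᵢ₊₁sᵢ₊₁ (1 ≤ i < n), aₙtₙ = b` (1-indexed). -/
def SchemeOfLength {S A : Type*} [Monoid S] (act : A → S → A) (n : ℕ) (a b : A) : Prop :=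
  ∃ (c : ℕ → A) (s t : ℕ → S),
    a = act (c 1) (s 1) ∧
    (∀ i, 1 ≤ i → i < n → act (c i) (t i) = act (c (i + 1)) (s (i + 1))) ∧
    act (c n) (t n) = b

theorem IsSubact.preimage {S A A' : Type*} {act : A → S → A} {act' : A' → S → A'}
    {φ : A → A'} {B : Set A'} (hB : IsSubact act' B)
    (hact : ∀ a s, φ (act a s) = act' (φ a) s) (hne : (φ ⁻¹' B).Nonempty) :
    IsSubact act (φ ⁻¹' B) := by
  refine ⟨hne, fun a ha s => ?_⟩
  rw [Set.mem_preimage, hact]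
  exact hB.2 (φ a) ha s

theorem Indecomp.of_surjective {S A A' : Type*} {act : A → S → A} {act' : A' → S → A'}
    (h : Indecomp act) {φ : A → A'} (hφ : Function.Surjective φ)
    (hact : ∀ a s, φ (act a s) = act' (φ a) s) : Indecomp act' := by
  rintro ⟨B, C, hB, hC, hdisjoint, hcover⟩
  refine h ⟨φ ⁻¹' B, φ ⁻¹' C, hB.preimage hact (hB.1.preimage hφ),
    hC.preimage hact (hC.1.preimage hφ), ?_, ?_⟩
  · rw [← Set.preimage_inter, hdisjoint, Set.preimage_empty]
  · rw [← Set.preimage_union, hcover, Set.preimage_univ]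

theorem stmt8_general {S A I J : Type*} [Nonempty A] {act : A → S → A}
    {f : J → I} (hf : Function.Injective f)
    (h : Indecomp (fun (g : I → A) (s : S) => fun i => act (g i) s)) :
    Indecomp (fun (g : J → A) (s : S) => fun j => act (g j) s) := by
  have restrict_surjective : Function.Surjective (fun g : I → A => g ∘ f) :=
    hf.surjective_comp_right
  exact h.of_surjective restrict_surjective fun _ _ => rfl

theorem stmt8 (S : Type*) [Monoid S] (I J : Type*) [Nonempty I] [Nonempty J]
    (f : J → I) (hf : Function.Injective f)
    (h : Indecomp (fun (g : I → S) (s : S) => fun i => g i * s)) :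
    Indecomp (fun (g : J → S) (s : S) => fun j => g j * s) :=
  stmt8_general hf h
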